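/- arXiv:2202.09306 — 3 statements merged into one kernel-verified Lean document; each statement's English description precedes it below -/
import Mathlib

section
/- Let N ≥ 1 and 0 ≤ n ≤ N. Let V(ℂ) ⊆ ℂ^N be the common zero locus of a set of polynomials with real coefficients, and assume V(ℂ) is irreducible for the Zariski topology (V(ℂ) is nonempty, and whenever V(ℂ) is contained in the union of two Zariski-closed sets, it is contained in one of them). Set V(ℝ) = V(ℂ) ∩ ℝ^N. Suppose x₀ ∈ V(ℝ) is a smooth point of V(ℂ) in the following sense: there exist a Euclidean-open neighborhood W of x₀ in ℂ^N and a polynomial map F: ℂ^N → ℂ^{N−n} with real coefficients such that V(ℂ) ∩ W = F⁻¹(0) ∩ W and the Jacobian matrix of F at x₀ has rank N−n. Let H be a subset of V(ℝ), open in the Euclidean (Hausdorff) topology of V(ℝ) inherited from ℝ^N, with x₀ ∈ H. Then H is Zariski-dense in V(ℝ): every polynomial P ∈ ℝ[x₁,…,x_N] vanishing at every point of H vanishes at every point of V(ℝ). -/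
open MvPolynomial

lemma zd_lift_aux {R A K : Type} [CommRing R] [IsDomain R] [IsIntegrallyClosed R]
    [CommRing A] [IsDomain A] [Field K] (g : R →+* A)
    (hinj : Function.Injective g) (hint : g.IsIntegral) (α : A) :
    ∃ p : Polynomial R, p.Monic ∧ p.eval₂ g α = 0 ∧
      ∀ (e : R →+* K) (_ : Function.Surjective e) (t : K), (p.map e).eval t = 0 →
        ∃ Q : Ideal A, Q.IsMaximal ∧ ∀ u : Polynomial R, (u.map e).eval t = 0 → u.eval₂ g α ∈ Q := by
  let _ : Algebra R A := g.toAlgebra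
  have : FaithfulSMul R A := (faithfulSMul_iff_algebraMap_injective _ _).2 hinj
  have : Module.IsTorsionFree R A := inferInstance
  have hi : ∀ x : A, IsIntegral R x := hint
  refine ⟨minpoly R α, minpoly.monic (hi α), minpoly.aeval R α, ?_⟩
  intro e he t hct
  let φ : Polynomial R →+* A := (Polynomial.aeval α).toRingHom
  let ψ : Polynomial R →+* K :=
    (Polynomial.evalRingHom t).comp (Polynomial.mapRingHom e)
  have hψs : Function.Surjective ψ := fun w => by
    obtain ⟨r, hr⟩ := he w
    exact ⟨Polynomial.C r, by simp [ψ, hr]⟩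
  have hmax : (RingHom.ker ψ).IsMaximal := RingHom.ker_isMaximal_of_surjective ψ hψs
  have hφC : φ.comp Polynomial.C = g := by
    ext r
    simp [φ]; rfl
  have hφint : φ.IsIntegral := by
    intro x
    obtain ⟨q, hq, hq0⟩ := hint x
    refine ⟨q.map Polynomial.C, hq.map _, ?_⟩
    rw [Polynomial.eval₂_map, hφC, hq0]
  obtain ⟨Q, hQp, hQ⟩ : ∃ Q : Ideal A, Q.IsPrime ∧ Q.comap φ = RingHom.ker ψ := by
    let _ := φ.toAlgebra
    have : Algebra.IsIntegral (Polynomial R) A := ⟨hφint⟩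
    obtain ⟨Q, -, h1, h2⟩ := Ideal.exists_ideal_over_prime_of_isIntegral (RingHom.ker ψ)
      (⊥ : Ideal A) (by
        intro f hf
        have hf' : Polynomial.aeval α f = 0 := hf
        rw [minpoly.isIntegrallyClosed_dvd_iff (hi α)] at hf'
        obtain ⟨k, rfl⟩ := hf'
        rw [RingHom.mem_ker, map_mul]
        have : ψ (minpoly R α) = 0 := hct
        rw [this, zero_mul])
    exact ⟨Q, h1, h2⟩
  refine ⟨Q, Ideal.isMaximal_of_isIntegral_of_isMaximal_comap' φ hφint Q (hQ ▸ hmax), ?_⟩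
  intro u hu
  have : u ∈ Q.comap φ := hQ ▸ hu
  exact this

lemma zd_lift_point {s N : ℕ} (I : Ideal (MvPolynomial (Fin N) ℂ)) [I.IsPrime]
    (g : MvPolynomial (Fin s) ℂ →ₐ[ℂ] (MvPolynomial (Fin N) ℂ ⧸ I))
    (hinj : Function.Injective g) (hint : g.IsIntegral) (a : MvPolynomial (Fin N) ℂ) :
    ∃ p : Polynomial (MvPolynomial (Fin s) ℂ), p.Monic ∧
      p.eval₂ g.toRingHom (Ideal.Quotient.mk I a) = 0 ∧
      ∀ (c : Fin s → ℂ) (t : ℂ), (p.map (eval c)).eval t = 0 →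
        ∃ z : Fin N → ℂ, (∀ f ∈ I, eval z f = 0) ∧
          (∀ G r, Ideal.Quotient.mk I G = g r → eval z G = eval c r) ∧ eval z a = t := by
  have : IsDomain (MvPolynomial (Fin N) ℂ ⧸ I) := Ideal.Quotient.isDomain I
  obtain ⟨p, hp, hp0, H⟩ := zd_lift_aux (K := ℂ) g.toRingHom hinj hint (Ideal.Quotient.mk I a)
  refine ⟨p, hp, hp0, ?_⟩
  intro c t hct
  obtain ⟨Q, hQm, key2⟩ := H (eval c) (fun w => ⟨MvPolynomial.C w, by simp⟩) t hct
  have hM : (Q.comap (Ideal.Quotient.mk I)).IsMaximal :=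
    Ideal.comap_isMaximal_of_surjective _ Ideal.Quotient.mk_surjective
  obtain ⟨z, hz⟩ := isMaximal_iff_eq_vanishingIdeal_singleton.1 hM
  have key : ∀ f, Ideal.Quotient.mk I f ∈ Q → eval z f = 0 := by
    intro f hf
    have : f ∈ vanishingIdeal ℂ {z} := hz ▸ hf
    simpa [mem_vanishingIdeal_singleton_iff, aeval_eq_eval] using this
  have hgC : ∀ w : ℂ, g (MvPolynomial.C w) = Ideal.Quotient.mk I (MvPolynomial.C w) :=
    fun w => g.commutes w
  refine ⟨z, fun f hf => key f ?_, fun G r hGr => ?_, ?_⟩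
  · rw [Ideal.Quotient.eq_zero_iff_mem.2 hf]; exact Q.zero_mem
  · have h := key2 (Polynomial.C (r - MvPolynomial.C (eval c r))) (by simp)
    have h2 := key (G - MvPolynomial.C (eval c r)) (by
      rw [Polynomial.eval₂_C] at h
      convert h using 1
      rw [map_sub, map_sub, hGr, ← hgC]; rfl)
    simpa [sub_eq_zero] using h2
  · have h := key2 (Polynomial.X - Polynomial.C (MvPolynomial.C t)) (by simp)
    have h2 := key (a - MvPolynomial.C t) (by
      rw [Polynomial.eval₂_sub, Polynomial.eval₂_C, Polynomial.eval₂_X] at h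
      convert h using 1
      rw [map_sub, ← hgC]; rfl)
    simpa [sub_eq_zero] using h2

lemma zd_small_root (q : Polynomial ℂ) (hq : q.Monic) (ε : ℝ) (hε : 0 < ε)
    (h : ‖q.eval 0‖ < ε ^ q.natDegree) : ∃ t, q.eval t = 0 ∧ ‖t‖ < ε := by
  by_contra! hc
  have hs := (IsAlgClosed.splits q)
  have h1 : q.eval 0 = (q.roots.map (fun t => 0 - t)).prod := by
    conv_lhs => rw [hs.eq_prod_roots_of_monic hq]
    rw [Polynomial.eval_multiset_prod, Multiset.map_map]
    simp
  have h2 : ∀ m : Multiset ℂ, (∀ t ∈ m, ε ≤ ‖t‖) → ε ^ m.card ≤ ‖(m.map (fun t => 0 - t)).prod‖ := by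
    intro m
    induction m using Multiset.induction_on with
    | empty => simp
    | cons a m ih =>
      intro hm
      have := ih (fun t ht => hm t (Multiset.mem_cons_of_mem ht))
      have ha := hm a (Multiset.mem_cons_self a m)
      simp only [Multiset.card_cons, Multiset.map_cons, Multiset.prod_cons, norm_mul, zero_sub, norm_neg, pow_succ] at *
      rw [mul_comm]
      gcongr
  have h3 := h2 q.roots (fun t ht => hc t (by simpa using Polynomial.isRoot_of_mem_roots ht))
  rw [← h1, ← hs.natDegree_eq_card_roots] at h3
  linarith

lemma zd_root_bound (q : Polynomial ℂ) (hq : q.Monic) (t : ℂ) (ht : q.eval t = 0) :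
    ‖t‖ ≤ 1 + ∑ k ∈ Finset.range q.natDegree, ‖q.coeff k‖ := by
  have h := Polynomial.IsRoot.norm_lt_cauchyBound hq.ne_zero ht
  refine (NNReal.coe_le_coe.2 h.le).trans ?_
  rw [Polynomial.cauchyBound]
  simp [hq.leadingCoeff]
  rw [add_comm]
  gcongr
  have : (Finset.range q.natDegree).sup (fun x => ‖q.coeff x‖₊) ≤ ∑ k ∈ Finset.range q.natDegree, ‖q.coeff k‖₊ :=
    Finset.sup_le fun k hk => Finset.single_le_sum (f := fun k => ‖q.coeff k‖₊) (fun _ _ => zero_le) hk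
  exact (NNReal.coe_le_coe.2 this).trans (by simp)

lemma zd_separate {N : ℕ} (E : Set (Fin N → ℂ)) (hE : E.Finite) (x : Fin N → ℂ) :
    ∃ a : MvPolynomial (Fin N) ℂ, eval x a = 0 ∧ ∀ z ∈ E, z ≠ x → eval z a ≠ 0 := by
  classical
  have : ∀ z : Fin N → ℂ, ∃ b : MvPolynomial (Fin N) ℂ, z ≠ x → eval x b = 1 ∧ eval z b = 0 := by
    intro z
    by_cases h : z = x
    · exact ⟨0, fun h' => absurd h h'⟩
    · obtain ⟨i, hi⟩ := Function.ne_iff.1 h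
      have : x i - z i ≠ 0 := sub_ne_zero.2 (Ne.symm hi)
      refine ⟨C (x i - z i)⁻¹ * (X i - C (z i)), fun _ => ⟨?_, ?_⟩⟩
      · simp [this]
      · simp
  choose b hb using this
  refine ⟨1 - ∏ z ∈ hE.toFinset.filter (· ≠ x), b z, ?_, ?_⟩
  · rw [map_sub, map_prod, Finset.prod_eq_one]
    · simp
    · intro z hz
      exact (hb z (Finset.mem_filter.1 hz).2).1
  · intro z hz hne
    rw [map_sub, map_prod, Finset.prod_eq_zero (i := z)]
    · simp
    · simp [hz, hne]
    · exact (hb z hne).2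

lemma zd_continuous_eval {N : ℕ} (f : MvPolynomial (Fin N) ℂ) :
    Continuous (fun z : Fin N → ℂ => eval z f) := MvPolynomial.continuous_eval f

lemma zd_dense {N : ℕ} (I : Ideal (MvPolynomial (Fin N) ℂ)) [hI : I.IsPrime]
    (x₀ : Fin N → ℂ) (hx₀ : ∀ f ∈ I, eval x₀ f = 0)
    (U : Set (Fin N → ℂ)) (hU : IsOpen U) (hxU : x₀ ∈ U)
    (Q : MvPolynomial (Fin N) ℂ)
    (hQ : ∀ z ∈ U, (∀ f ∈ I, eval z f = 0) → eval z Q = 0) : Q ∈ I := by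
  obtain ⟨s, -, g, hinj, hint⟩ := exists_integral_inj_algHom_of_quotient I hI.ne_top
  have hdom : IsDomain (MvPolynomial (Fin N) ℂ ⧸ I) := Ideal.Quotient.isDomain I
  by_contra hQI
  -- a nonzero element of the base ring divisible by `Q`
  obtain ⟨r, hr0, b, hb⟩ : ∃ r : MvPolynomial (Fin s) ℂ, r ≠ 0 ∧ ∃ b : MvPolynomial (Fin N) ℂ,
      Ideal.Quotient.mk I (Q * b) = g r := by
    have hne : Ideal.Quotient.mk I Q ≠ 0 := fun h => hQI (Ideal.Quotient.eq_zero_iff_mem.1 h)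
    have hbot : (Ideal.span {Ideal.Quotient.mk I Q}).comap g.toRingHom ≠ ⊥ := by
      let _ := g.toRingHom.toAlgebra
      exact Ideal.comap_ne_bot_of_integral_mem hne (Ideal.mem_span_singleton_self _) (hint _)
    obtain ⟨r, hr, hr0⟩ := Submodule.exists_mem_ne_zero_of_ne_bot hbot
    obtain ⟨b', hb'⟩ := Ideal.mem_span_singleton.1 (Ideal.mem_comap.1 hr)
    obtain ⟨b, rfl⟩ := Ideal.Quotient.mk_surjective b'
    exact ⟨r, hr0, b, by rw [map_mul]; exact hb'.symm⟩
  -- the projection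
  choose G hG using fun i : Fin s => Ideal.Quotient.mk_surjective (I := I) (g (X i))
  let π : (Fin N → ℂ) → (Fin s → ℂ) := fun z i => eval z (G i)
  have hπc : Continuous π := continuous_pi fun i => zd_continuous_eval (G i)
  let ev : ∀ z : Fin N → ℂ, (∀ f ∈ I, eval z f = 0) → (MvPolynomial (Fin N) ℂ ⧸ I) →+* ℂ :=
    fun z hz => Ideal.Quotient.lift I (eval z) hz
  have hev : ∀ z hz f, ev z hz (Ideal.Quotient.mk I f) = eval z f := fun z hz f => rfl
  have hevg : ∀ z hz, (ev z hz).comp g.toRingHom = eval (π z) := by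
    intro z hz
    apply MvPolynomial.ringHom_ext
    · intro w
      have : g (MvPolynomial.C w) = Ideal.Quotient.mk I (MvPolynomial.C w) := g.commutes w
      change ev z hz (g (C w)) = _
      rw [this, hev]; simp
    · intro i
      change ev z hz (g (X i)) = _
      rw [← hG i, hev]; simp [π]
  have hroot : ∀ (z) (_ : ∀ f ∈ I, eval z f = 0) (p : Polynomial (MvPolynomial (Fin s) ℂ)) a,
      p.eval₂ g.toRingHom (Ideal.Quotient.mk I a) = 0 →
      (p.map (eval (π z))).eval (eval z a) = 0 := by
    intro z hz p a hp
    have := congrArg (ev z hz) hp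
    rwa [Polynomial.hom_eval₂, hevg, hev, map_zero, ← Polynomial.eval_map] at this
  -- integrality of the coordinates
  choose q hqm hq0 using fun i : Fin N => hint (Ideal.Quotient.mk I (X i))
  have hqroot : ∀ (z) (_ : ∀ f ∈ I, eval z f = 0) i, ((q i).map (eval (π z))).eval (z i) = 0 := by
    intro z hz i
    have := hroot z hz (q i) (X i) (hq0 i)
    rwa [eval_X] at this
  set y₀ := π x₀ with hy₀
  -- the fibre is finite
  have hfin : {z | (∀ f ∈ I, eval z f = 0) ∧ π z = y₀}.Finite := by
    refine (Set.Finite.pi (t := fun i => {t : ℂ | ((q i).map (eval y₀)).eval t = 0}) ?_).subset ?_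
    · intro i
      have hne : (q i).map (eval y₀) ≠ 0 := ((hqm i).map _).ne_zero
      refine (((q i).map (eval y₀)).roots.toFinset.finite_toSet).subset ?_
      intro t ht
      simpa [hne] using ht
    · rintro z ⟨hz, hzy⟩ i -
      have := hqroot z hz i
      rw [hzy] at this
      exact this
  obtain ⟨a, ha0, hane⟩ := zd_separate _ hfin x₀
  obtain ⟨p, hpm, hp0, hlift⟩ := zd_lift_point I g hinj hint a
  -- compactness
  let Z : Set (Fin N → ℂ) := {z | ∀ f ∈ I, eval z f = 0}
  have hZ : IsClosed Z := by
    have : Z = ⋂ f ∈ I, {z | eval z f = 0} := by ext; simp [Z]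
    rw [this]
    exact isClosed_biInter fun f _ => isClosed_eq (zd_continuous_eval f) continuous_const
  let K : Set (Fin N → ℂ) := Z ∩ π ⁻¹' Metric.closedBall y₀ 1
  have hKc : IsClosed K := hZ.inter (Metric.isClosed_closedBall.preimage hπc)
  have hKb : ∃ M : ℝ, ∀ z ∈ K, ∀ i, ‖z i‖ ≤ M := by
    have : ∀ i, ∃ M : ℝ, ∀ z ∈ K, ‖z i‖ ≤ M := by
      intro i
      have hcont : Continuous (fun y : Fin s → ℂ =>
          1 + ∑ k ∈ Finset.range (q i).natDegree, ‖eval y ((q i).coeff k)‖) := by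
        refine continuous_const.add (continuous_finsetSum _ fun k _ => ?_)
        exact (zd_continuous_eval _).norm
      obtain ⟨M, hM⟩ := (isCompact_closedBall y₀ (1 : ℝ)).bddAbove_image hcont.continuousOn
      refine ⟨M, fun z hz => ?_⟩
      have h1 := zd_root_bound _ ((hqm i).map (eval (π z))) (z i) (hqroot z hz.1 i)
      refine h1.trans (hM ⟨π z, hz.2, ?_⟩)
      simp [(hqm i).natDegree_map]
    choose M hM using this
    refine ⟨∑ i, |M i|, fun z hz i => (hM i z hz).trans ((le_abs_self _).trans ?_)⟩
    exact Finset.single_le_sum (f := fun i => |M i|) (fun _ _ => abs_nonneg _) (Finset.mem_univ i)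
  have hK : IsCompact K := by
    obtain ⟨M, hM⟩ := hKb
    refine Metric.isCompact_of_isClosed_isBounded hKc ?_
    rw [isBounded_iff_forall_norm_le]
    refine ⟨|M|, fun z hz => ?_⟩
    rw [pi_norm_le_iff_of_nonneg (abs_nonneg _)]
    exact fun i => (hM z hz i).trans (le_abs_self _)
  have hKU : IsCompact (K \ U) := hK.diff hU
  let θ : (Fin N → ℂ) → (Fin s → ℂ) × ℂ := fun z => (π z, eval z a)
  have hθ : Continuous θ := hπc.prodMk (zd_continuous_eval a)
  have hθc : IsClosed (θ '' (K \ U)) := (hKU.image hθ).isClosed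
  have hθn : (y₀, (0 : ℂ)) ∉ θ '' (K \ U) := by
    rintro ⟨z, ⟨hzK, hzU⟩, hz⟩
    have h1 : π z = y₀ := congrArg Prod.fst hz
    have h2 : eval z a = 0 := congrArg Prod.snd hz
    have hzx : z ≠ x₀ := by rintro rfl; exact hzU hxU
    exact hane z ⟨hzK.1, h1⟩ hzx h2
  obtain ⟨δ, hδ, hball⟩ := Metric.isOpen_iff.1 hθc.isOpen_compl _ hθn
  -- all `c` near `y₀` lie in the image of `U`
  have hcont0 : Continuous (fun c : Fin s → ℂ => (p.map (eval c)).eval 0) := by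
    have : (fun c : Fin s → ℂ => (p.map (eval c)).eval 0) = fun c => eval c (p.coeff 0) := by
      ext c
      rw [← Polynomial.coeff_zero_eq_eval_zero, Polynomial.coeff_map]
    rw [this]
    exact zd_continuous_eval _
  have hzero : (p.map (eval y₀)).eval 0 = 0 := by
    have := hroot x₀ hx₀ p a hp0
    rwa [ha0] at this
  have hev1 : ∀ᶠ c in nhds y₀, ‖(p.map (eval c)).eval 0‖ < δ ^ p.natDegree := by
    have := hcont0.norm.tendsto y₀
    refine this.eventually_lt_const ?_
    rw [hzero, norm_zero]; positivity
  have hev2 : ∀ᶠ c in nhds y₀, eval c r = 0 := by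
    filter_upwards [hev1, Metric.ball_mem_nhds y₀ hδ, Metric.ball_mem_nhds y₀ one_pos] with c h1 h2 h3
    rw [← hpm.natDegree_map (eval c)] at h1
    obtain ⟨t, ht0, htδ⟩ := zd_small_root _ (hpm.map (eval c)) δ hδ h1
    obtain ⟨z, hzI, hzG, hza⟩ := hlift c t ht0
    have hπz : π z = c := by
      ext i
      simpa using hzG (G i) (X i) (hG i)
    have hzU : z ∈ U := by
      by_contra hzU
      have hmem : θ z ∈ θ '' (K \ U) := ⟨z, ⟨⟨hzI, by
        change π z ∈ Metric.closedBall y₀ 1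
        rw [hπz]; exact Metric.ball_subset_closedBall h3⟩, hzU⟩, rfl⟩
      refine hball ?_ hmem
      rw [← ball_prod_same]
      refine ⟨?_, ?_⟩
      · change π z ∈ Metric.ball y₀ δ
        rwa [hπz]
      · change eval z a ∈ Metric.ball (0 : ℂ) δ
        rw [hza]; simpa using htδ
    have := hzG (Q * b) r hb
    rw [← this, map_mul, hQ z hzU hzI, zero_mul]
  obtain ⟨η, hη, hηb⟩ := Metric.eventually_nhds_iff_ball.1 hev2
  refine hr0 (MvPolynomial.funext_set (fun i => Metric.ball (y₀ i) η) ?_ ?_)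
  · intro i
    exact infinite_of_mem_nhds (y₀ i) (Metric.ball_mem_nhds _ hη)
  · intro c hc
    rw [map_zero]
    refine hηb c ?_
    rw [ball_pi _ hη]
    exact hc

lemma zd_identity {N : ℕ} (h : (Fin N → ℂ) → ℂ) (r : ℝ) (hr : 0 < r)
    (hd : ∀ w ∈ Metric.ball (0 : Fin N → ℂ) r, DifferentiableAt ℂ h w)
    (h0 : ∀ w ∈ Metric.ball (0 : Fin N → ℂ) r, star w = w → h w = 0) :
    ∀ w ∈ Metric.ball (0 : Fin N → ℂ) (r / 4), h w = 0 := by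
  intro w hw
  rw [mem_ball_zero_iff] at hw
  let u : Fin N → ℂ := fun i => ((w i).re : ℂ)
  let v : Fin N → ℂ := fun i => ((w i).im : ℂ)
  have hu : ‖u‖ < r / 4 := by
    refine lt_of_le_of_lt ((pi_norm_le_iff_of_nonneg (norm_nonneg w)).2 fun i => ?_) hw
    simp only [u, Complex.norm_real]
    exact (Complex.abs_re_le_norm _).trans (norm_le_pi_norm w i)
  have hv : ‖v‖ < r / 4 := by
    refine lt_of_le_of_lt ((pi_norm_le_iff_of_nonneg (norm_nonneg w)).2 fun i => ?_) hw
    simp only [v, Complex.norm_real]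
    exact (Complex.abs_im_le_norm _).trans (norm_le_pi_norm w i)
  have hmem : ∀ t ∈ Metric.ball (0 : ℂ) 2, u + t • v ∈ Metric.ball (0 : Fin N → ℂ) r := by
    intro t ht
    rw [mem_ball_zero_iff] at ht ⊢
    have h1 : ‖u + t • v‖ ≤ ‖u‖ + ‖t‖ * ‖v‖ := (norm_add_le _ _).trans (by rw [norm_smul])
    have h2 : ‖t‖ * ‖v‖ ≤ 2 * (r / 4) := by gcongr
    linarith
  have han : AnalyticOnNhd ℂ (fun t : ℂ => h (u + t • v)) (Metric.ball 0 2) := by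
    refine DifferentiableOn.analyticOnNhd ?_ Metric.isOpen_ball
    intro t ht
    refine DifferentiableAt.differentiableWithinAt ?_
    have h2 : DifferentiableAt ℂ (fun t : ℂ => u + t • v) t := by fun_prop
    exact (hd _ (hmem t ht)).comp t h2
  have hpre : IsPreconnected (Metric.ball (0 : ℂ) 2) := (convex_ball _ _).isPreconnected
  have hfreq : ∃ᶠ t in nhdsWithin (0 : ℂ) {0}ᶜ, h (u + t • v) = 0 := by
    have htend : Filter.Tendsto (fun x : ℝ => (x : ℂ)) (nhdsWithin 0 {0}ᶜ) (nhdsWithin (0 : ℂ) {0}ᶜ) := by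
      refine tendsto_nhdsWithin_iff.2 ⟨?_, ?_⟩
      · exact (Complex.continuous_ofReal.tendsto' 0 0 (by simp)).mono_left nhdsWithin_le_nhds
      · filter_upwards [self_mem_nhdsWithin] with x hx
        simpa using hx
    refine htend.frequently (Filter.Eventually.frequently ?_)
    have : ∀ᶠ x : ℝ in nhdsWithin 0 {0}ᶜ, x ∈ Metric.ball (0 : ℝ) 2 :=
      nhdsWithin_le_nhds (Metric.ball_mem_nhds _ (by norm_num))
    filter_upwards [this] with x hx
    refine h0 _ (hmem _ (by simpa using hx)) ?_
    ext i
    simp [u, v]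
  have := han.eqOn_zero_of_preconnected_of_frequently_eq_zero hpre (Metric.mem_ball_self (by norm_num)) hfreq
    (x := Complex.I) (by simp)
  have hw' : u + Complex.I • v = w := by
    ext i
    simp only [u, v, Pi.add_apply, Pi.smul_apply, smul_eq_mul]
    rw [mul_comm, Complex.re_add_im]
  simpa [hw'] using this

lemma zd_analytic {N m : ℕ} (f : (Fin N → ℂ) → (Fin m → ℂ)) (hf : ContDiff ℂ 1 f)
    (hfs : ∀ z, f (star z) = star (f z)) (x₀ : Fin N → ℂ) (hxs : star x₀ = x₀) (hfx : f x₀ = 0)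
    (J : (Fin N → ℂ) →L[ℂ] (Fin m → ℂ)) (hJ : HasFDerivAt f J x₀)
    (hJs : ∀ v, J (star v) = star (J v))
    (B : (Fin m → ℂ) →L[ℂ] (Fin N → ℂ)) (hBs : ∀ v, B (star v) = star (B v))
    (hJB : ∀ v, J (B v) = v)
    (P : (Fin N → ℂ) → ℂ) (hP : Differentiable ℂ P)
    (U : Set (Fin N → ℂ)) (hU : U ∈ nhds x₀)
    (hPU : ∀ z ∈ U, star z = z → f z = 0 → P z = 0) :
    ∀ᶠ z in nhds x₀, f z = 0 → P z = 0 := by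
  let Φ : (Fin N → ℂ) → (Fin N → ℂ) := fun z => B (f z) + (z - x₀) - B (J (z - x₀))
  have hΦc : ContDiff ℂ 1 Φ := by fun_prop
  have hΦ0 : Φ x₀ = 0 := by simp [Φ, hfx]
  have hΦd : HasFDerivAt Φ ((ContinuousLinearEquiv.refl ℂ (Fin N → ℂ) :
      (Fin N → ℂ) ≃L[ℂ] (Fin N → ℂ)) : (Fin N → ℂ) →L[ℂ] (Fin N → ℂ)) x₀ := by
    have h1 : HasFDerivAt (fun z => B (f z)) (B.comp J) x₀ := B.hasFDerivAt.comp x₀ hJ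
    have h2 : HasFDerivAt (fun z : Fin N → ℂ => z - x₀) (ContinuousLinearMap.id ℂ _) x₀ :=
      (hasFDerivAt_id x₀).sub_const x₀
    have h3 : HasFDerivAt (fun z => B (J (z - x₀))) ((B.comp J).comp (ContinuousLinearMap.id ℂ _)) x₀ :=
      (B.comp J).hasFDerivAt.comp x₀ h2
    have h4 := (h1.add h2).sub h3
    have h5 : (B.comp J + ContinuousLinearMap.id ℂ (Fin N → ℂ)) -
        (B.comp J).comp (ContinuousLinearMap.id ℂ (Fin N → ℂ)) =
        ((ContinuousLinearEquiv.refl ℂ (Fin N → ℂ) :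
      (Fin N → ℂ) ≃L[ℂ] (Fin N → ℂ)) : (Fin N → ℂ) →L[ℂ] (Fin N → ℂ)) := by
      ext; simp
    rw [← h5]
    exact h4
  have hΦs : ∀ z, Φ (star z) = star (Φ z) := by
    intro z
    have : star z - x₀ = star (z - x₀) := by rw [star_sub, hxs]
    simp only [Φ]
    rw [this, hfs, hBs, hJs, hBs, star_sub (B (f z) + (z - x₀)), star_add]
  have hJΦ : ∀ z, J (Φ z) = f z := by
    intro z
    simp only [Φ, map_sub, map_add, hJB]
    abel
  let e := hΦc.contDiffAt.toOpenPartialHomeomorph Φ hΦd one_ne_zero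
  have hex : x₀ ∈ e.source := hΦc.contDiffAt.mem_toOpenPartialHomeomorph_source hΦd one_ne_zero
  have he : ∀ z, e z = Φ z := fun z => rfl
  have he0 : (0 : Fin N → ℂ) ∈ e.target := by
    have := e.map_source hex
    rwa [he, hΦ0] at this
  have hes0 : e.symm 0 = x₀ := by
    have := e.left_inv hex
    rwa [he, hΦ0] at this
  have hΨ : ContDiffAt ℂ 1 e.symm 0 := by
    have := hΦc.contDiffAt.to_localInverse hΦd one_ne_zero
    rw [hΦ0] at this
    exact this
  let pr : (Fin N → ℂ) →L[ℂ] (Fin N → ℂ) := ContinuousLinearMap.id ℂ _ - B.comp J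
  have hpr : ∀ w, pr w = w - B (J w) := fun w => rfl
  have hprs : ∀ w, pr (star w) = star (pr w) := by
    intro w; rw [hpr, hpr, hJs, hBs, star_sub]
  have hJpr : ∀ w, J (pr w) = 0 := by
    intro w; rw [hpr, map_sub, hJB, sub_self]
  have hprt : Filter.Tendsto pr (nhds 0) (nhds 0) := pr.continuous.tendsto' 0 0 (map_zero _)
  have hΨt : Filter.Tendsto e.symm (nhds 0) (nhds x₀) := by
    have := hΨ.continuousAt.tendsto
    rwa [hes0] at this
  have hst : Filter.Tendsto (fun z : Fin N → ℂ => star z) (nhds x₀) (nhds x₀) :=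
    continuous_star.tendsto' _ _ hxs
  have hsrc : e.source ∈ nhds x₀ := e.open_source.mem_nhds hex
  have ev1 : ∀ᶠ w in nhds (0 : Fin N → ℂ), DifferentiableAt ℂ e.symm w := by
    filter_upwards [hΨ.eventually (by simp)] with w hw
    exact hw.differentiableAt one_ne_zero
  have ev2 : ∀ᶠ w in nhds (0 : Fin N → ℂ), DifferentiableAt ℂ e.symm (pr w) ∧ pr w ∈ e.target ∧
      e.symm (pr w) ∈ U ∧ star (e.symm (pr w)) ∈ e.source := by
    have : ∀ᶠ w in nhds (0 : Fin N → ℂ), DifferentiableAt ℂ e.symm w ∧ w ∈ e.target ∧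
        e.symm w ∈ U ∧ star (e.symm w) ∈ e.source := by
     filter_upwards [ev1, e.open_target.mem_nhds he0, hΨt.eventually hU,
      (hst.comp hΨt).eventually hsrc] with w a b c d using ⟨a, b, c, d⟩
    exact hprt.eventually this
  obtain ⟨r, hr, hball⟩ := Metric.eventually_nhds_iff_ball.1 ev2
  have hid := zd_identity (fun w => P (e.symm (pr w))) r hr (by
      intro w hw
      have := (hball w hw).1
      exact (hP _).comp w (this.comp w pr.differentiableAt)) (by
      intro w hw hws
      obtain ⟨-, h2, h3, h4⟩ := hball w hw
      have hz : Φ (e.symm (pr w)) = pr w := e.right_inv h2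
      refine hPU _ h3 ?_ ?_
      · refine e.injOn h4 (e.map_target h2) ?_
        rw [he, he, hΦs, hz, ← hprs, hws]
      · rw [← hJΦ, hz, hJpr])
  have hΦt : Filter.Tendsto Φ (nhds x₀) (nhds 0) := by
    have := hΦc.continuous.tendsto x₀
    rwa [hΦ0] at this
  filter_upwards [hsrc, hΦt.eventually (Metric.ball_mem_nhds 0 (by positivity : 0 < r / 4))]
    with z hz hzb hfz
  have := hid _ hzb
  have hp : pr (Φ z) = Φ z := by rw [hpr, hJΦ, hfz, map_zero, sub_zero]
  have hl : e.symm (Φ z) = z := e.left_inv hz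
  simpa only [hp, hl] using this

lemma zd_hasFDerivAt {N : ℕ} (f : MvPolynomial (Fin N) ℝ) (x : Fin N → ℂ) :
    HasFDerivAt (fun z : Fin N → ℂ => aeval z f)
      (∑ i, (aeval x (pderiv i f)) • (ContinuousLinearMap.proj i : (Fin N → ℂ) →L[ℂ] ℂ)) x := by
  induction f using MvPolynomial.induction_on with
  | C a =>
    simp only [aeval_C]
    refine (hasFDerivAt_const (𝕜 := ℂ) (algebraMap ℝ ℂ a) x).congr_fderiv ?_
    ext v
    simp
  | add p q hp hq =>
    have := hp.add hq
    simp only [map_add]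
    refine this.congr_fderiv ?_
    ext v
    simp [add_mul, Finset.sum_add_distrib]
  | mul_X p n hp =>
    have hX : HasFDerivAt (fun z : Fin N → ℂ => z n)
      (ContinuousLinearMap.proj n : (Fin N → ℂ) →L[ℂ] ℂ) x :=
      (ContinuousLinearMap.proj (R := ℂ) (φ := fun _ : Fin N => ℂ) n).hasFDerivAt
    have := hp.mul hX
    simp only [map_mul, aeval_X]
    refine this.congr_fderiv ?_
    ext v
    simp [pderiv_X, Pi.single_apply, Finset.mul_sum, mul_comm, apply_ite]
    simp [mul_add, Finset.sum_add_distrib, mul_left_comm]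

lemma zd_star {N : ℕ} (f : MvPolynomial (Fin N) ℝ) (z : Fin N → ℂ) :
    aeval (star z) f = star (aeval z f) := by
  induction f using MvPolynomial.induction_on with
  | C a => simp
  | add p q hp hq => simp [hp, hq]
  | mul_X p n hp => simp [hp]

lemma zd_contDiff {N : ℕ} (f : MvPolynomial (Fin N) ℝ) :
    ContDiff ℂ 1 (fun z : Fin N → ℂ => aeval z f) := by
  induction f using MvPolynomial.induction_on with
  | C a => simpa using contDiff_const
  | add p q hp hq => simpa using hp.add hq
  | mul_X p n hp => simpa using hp.mul (contDiff_apply ℂ ℂ n)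

lemma zd_right_inverse {N m : ℕ} (A : Matrix (Fin m) (Fin N) ℂ) (hA : A.rank = m)
    (hs : ∀ j i, star (A j i) = A j i) :
    ∃ B : Matrix (Fin N) (Fin m) ℂ, A * B = 1 ∧ ∀ i j, star (B i j) = B i j := by
  have hsurj : Function.Surjective A.mulVecLin := by
    rw [← LinearMap.range_eq_top]
    apply Submodule.eq_top_of_finrank_eq
    rw [Module.finrank_fin_fun]
    exact hA
  choose b hb using fun j : Fin m => hsurj (Pi.single j 1)
  refine ⟨Matrix.of fun i j => ((b j i).re : ℂ), ?_, by simp⟩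
  ext k j
  have h1 := congrFun (hb j) k
  simp only [Matrix.mulVecLin_apply, Matrix.mulVec, dotProduct] at h1
  have hre : ∀ i, A k i = ((A k i).re : ℂ) := fun i => (Complex.conj_eq_iff_re.1 (hs k i)).symm
  rw [Matrix.mul_apply]
  have h2 : ∑ i, A k i * ((b j i).re : ℂ) = (((∑ i, A k i * b j i).re : ℝ) : ℂ) := by
    rw [Complex.re_sum, Complex.ofReal_sum]
    refine Finset.sum_congr rfl fun i _ => ?_
    rw [hre i, Complex.re_ofReal_mul, Complex.ofReal_mul]
  simp only [Matrix.of_apply]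
  rw [h2, h1, Matrix.one_apply, Pi.single_apply]
  split_ifs <;> simp

lemma zd_matrix_star {N m : ℕ} (A : Matrix (Fin m) (Fin N) ℂ)
    (hs : ∀ j i, star (A j i) = A j i) (v : Fin N → ℂ) :
    A.mulVec (star v) = star (A.mulVec v) := by
  ext j
  simp only [Matrix.mulVec, dotProduct, Pi.star_apply, star_sum, star_mul', hs]

/-- If an irreducible complex affine variety `V(ℂ) ⊆ ℂ^N`, cut out by real polynomials,
has a smooth real point `x₀`, then any Euclidean-open subset `H` of `V(ℝ) = V(ℂ) ∩ ℝ^N`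
containing `x₀` is Zariski-dense in `V(ℝ)`: a real polynomial vanishing on `H` vanishes
on `V(ℝ)`. -/
theorem real_points_zariski_dense_of_smooth_point
    (N nd : ℕ) (hN : 1 ≤ N) (hnd : nd ≤ N)
    (S : Set (MvPolynomial (Fin N) ℝ))
    (V : Set (Fin N → ℂ)) (hV : V = {z | ∀ p ∈ S, MvPolynomial.aeval z p = 0})
    (hne : V.Nonempty)
    (hirr : ∀ T₁ T₂ : Set (MvPolynomial (Fin N) ℂ),
      V ⊆ {z | ∀ p ∈ T₁, MvPolynomial.eval z p = 0} ∪
          {z | ∀ p ∈ T₂, MvPolynomial.eval z p = 0} →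
      (V ⊆ {z | ∀ p ∈ T₁, MvPolynomial.eval z p = 0} ∨
       V ⊆ {z | ∀ p ∈ T₂, MvPolynomial.eval z p = 0}))
    (x₀ : Fin N → ℂ) (hx₀V : x₀ ∈ V) (hx₀R : ∀ i, (x₀ i).im = 0)
    -- `x₀` is a smooth point of `V(ℂ)`:
    (W : Set (Fin N → ℂ)) (hWopen : IsOpen W) (hx₀W : x₀ ∈ W)
    (F : Fin (N - nd) → MvPolynomial (Fin N) ℝ)
    (hVF : V ∩ W = {z ∈ W | ∀ j, MvPolynomial.aeval z (F j) = 0})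
    (hJac : (Matrix.of fun (j : Fin (N - nd)) (i : Fin N) =>
        MvPolynomial.aeval x₀ (MvPolynomial.pderiv i (F j))).rank = N - nd)
    -- `H` is an open subset of `V(ℝ)` containing `x₀`:
    (H : Set (Fin N → ℂ))
    (hH : ∃ O : Set (Fin N → ℂ), IsOpen O ∧ H = {z ∈ V | ∀ i, (z i).im = 0} ∩ O)
    (hx₀H : x₀ ∈ H)
    (P : MvPolynomial (Fin N) ℝ) (hP : ∀ z ∈ H, MvPolynomial.aeval z P = 0) :
    ∀ z ∈ V, (∀ i, (z i).im = 0) → MvPolynomial.aeval z P = 0 := by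
  classical
  obtain ⟨O, hO, rfl⟩ := hH
  have hreal : ∀ z : Fin N → ℂ, star z = z ↔ ∀ i, (z i).im = 0 := by
    intro z
    rw [funext_iff]
    exact forall_congr' fun i => Complex.conj_eq_iff_im
  have hxs : star x₀ = x₀ := (hreal x₀).2 hx₀R
  set A : Matrix (Fin (N - nd)) (Fin N) ℂ := Matrix.of fun (j : Fin (N - nd)) (i : Fin N) =>
        MvPolynomial.aeval x₀ (MvPolynomial.pderiv i (F j)) with hAdef
  have hAs : ∀ j i, star (A j i) = A j i := by
    intro j i
    simp only [hAdef, Matrix.of_apply]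
    rw [← zd_star, hxs]
  obtain ⟨B, hAB, hBs⟩ := zd_right_inverse A hJac hAs
  let Jl : (Fin N → ℂ) →L[ℂ] (Fin (N - nd) → ℂ) := LinearMap.toContinuousLinearMap A.mulVecLin
  let Bl : (Fin (N - nd) → ℂ) →L[ℂ] (Fin N → ℂ) := LinearMap.toContinuousLinearMap B.mulVecLin
  have hJl : ∀ v, Jl v = A.mulVec v := fun v => rfl
  have hBl : ∀ v, Bl v = B.mulVec v := fun v => rfl
  let f : (Fin N → ℂ) → (Fin (N - nd) → ℂ) := fun z j => aeval z (F j)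
  have hfV : ∀ z ∈ W, z ∈ V ↔ f z = 0 := by
    intro z hz
    have h1 : z ∈ V ∩ W ↔ z ∈ {z ∈ W | ∀ j, MvPolynomial.aeval z (F j) = 0} := by rw [hVF]
    simp only [Set.mem_inter_iff, Set.mem_ofPred_eq, hz, and_true, true_and] at h1
    rw [h1, funext_iff]
    rfl
  have hloc : ∀ᶠ z in nhds x₀, f z = 0 → aeval z P = 0 := by
    refine zd_analytic f (contDiff_pi.2 fun j => zd_contDiff (F j)) ?_ x₀ hxs
      ((hfV x₀ hx₀W).1 hx₀V) Jl ?_ ?_ Bl ?_ ?_ (fun z => aeval z P)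
      ((zd_contDiff P).differentiable one_ne_zero) (O ∩ W)
      ((hO.inter hWopen).mem_nhds ⟨hx₀H.2, hx₀W⟩) ?_
    · intro z
      ext j
      exact zd_star (F j) z
    · rw [hasFDerivAt_pi']
      intro j
      refine (zd_hasFDerivAt (F j) x₀).congr_fderiv ?_
      ext v
      simp [hJl, Matrix.mulVec, dotProduct, hAdef]
    · intro v; rw [hJl, hJl, zd_matrix_star A hAs]
    · intro v; rw [hBl, hBl, zd_matrix_star B hBs]
    · intro v; rw [hJl, hBl, Matrix.mulVec_mulVec, hAB, Matrix.one_mulVec]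
    · intro z hz hzs hfz
      exact hP z ⟨⟨(hfV z hz.2).2 hfz, (hreal z).1 hzs⟩, hz.1⟩
  obtain ⟨U, hUsub, hUo, hxU⟩ := mem_nhds_iff.1 hloc
  let I : Ideal (MvPolynomial (Fin N) ℂ) := vanishingIdeal ℂ V
  have hmemI : ∀ q, q ∈ I ↔ ∀ z ∈ V, eval z q = 0 := by
    intro q
    simp [I, mem_vanishingIdeal_iff, aeval_eq_eval]
  have hIp : I.IsPrime := by
    refine ⟨?_, ?_⟩
    · intro h
      have : (1 : MvPolynomial (Fin N) ℂ) ∈ I := h ▸ Submodule.mem_top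
      simpa using (hmemI 1).1 this x₀ hx₀V
    · intro p q hpq
      rw [hmemI] at hpq
      have := hirr {p} {q} (by
        intro z hz
        have := hpq z hz
        rw [map_mul, mul_eq_zero] at this
        simpa using this)
      rw [hmemI, hmemI]
      refine this.imp (fun h z hz => ?_) (fun h z hz => ?_)
      · simpa using h hz
      · simpa using h hz
  have hmap : ∀ (p : MvPolynomial (Fin N) ℝ) (z : Fin N → ℂ),
      eval z (MvPolynomial.map (algebraMap ℝ ℂ) p) = aeval z p := by
    intro p z
    rw [eval_map, aeval_def]
  have hVI : ∀ z, (∀ q ∈ I, eval z q = 0) → z ∈ V := by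
    intro z hz
    rw [hV]
    intro p hp
    rw [← hmap]
    refine hz _ ((hmemI _).2 fun w hw => ?_)
    rw [hmap]
    rw [hV] at hw
    exact hw p hp
  have hPI : MvPolynomial.map (algebraMap ℝ ℂ) P ∈ I := by
    refine zd_dense I x₀ (fun q hq => (hmemI q).1 hq x₀ hx₀V) (U ∩ W) (hUo.inter hWopen)
      ⟨hxU, hx₀W⟩ _ ?_
    intro z hz hzI
    rw [hmap]
    exact hUsub hz.1 ((hfV z hz.2).1 (hVI z hzI))
  intro z hz _
  rw [← hmap]
  exact (hmemI _).1 hPI z hz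
end

section
/- Let N ≥ 1 and 0 ≤ n ≤ N. Let V(ℂ) ⊆ ℂ^N be the common zero locus of a set of polynomials with real coefficients, and assume V(ℂ) is irreducible for the Zariski topology (V(ℂ) is nonempty, and whenever V(ℂ) is contained in the union of two Zariski-closed sets, it is contained in one of them). Set V(ℝ) = V(ℂ) ∩ ℝ^N. Suppose x₀ ∈ V(ℝ) is a smooth point of V(ℂ) in the following sense: there exist a Euclidean-open neighborhood W of x₀ in ℂ^N and a polynomial map F: ℂ^N → ℂ^{N−n} with real coefficients such that V(ℂ) ∩ W = F⁻¹(0) ∩ W and the Jacobian matrix of F at x₀ has rank N−n. Let H be a subset of V(ℝ), open in the Euclidean (Hausdorff) topology of V(ℝ) inherited from ℝ^N, with x₀ ∈ H. Then H is Zariski-dense in V(ℂ): every polynomial P ∈ ℂ[x₁,…,x_N] vanishing at every point of H vanishes at every point of V(ℂ). -/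
open MvPolynomial


lemma aux_lift {R S : Type} [CommRing R] [IsDomain R] [CommRing S] [IsDomain S]
    (e : R →+* ℂ) (he : Function.Injective e) (i : R →+* S) (hi : Function.Injective i)
    (hint : i.IsIntegral) : ∃ l : S →+* ℂ, ∀ r, l (i r) = e r := by
  let _ : Algebra R S := i.toAlgebra
  let _ : Algebra R ℂ := e.toAlgebra
  have : FaithfulSMul R ℂ := (faithfulSMul_iff_algebraMap_injective R ℂ).2 he
  have : FaithfulSMul R S := (faithfulSMul_iff_algebraMap_injective R S).2 hi
  have : Algebra.IsIntegral R S := ⟨fun x => hint x⟩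
  let l : S →ₐ[R] ℂ := IsAlgClosed.lift
  exact ⟨l.toRingHom, fun r => l.commutes r⟩

lemma aux_ext {B A : Type} [CommRing B] [IsDomain B] [IsIntegrallyClosed B] [CommRing A] [IsDomain A]
    [Algebra B A] [Module.IsTorsionFree B A] [Algebra.IsIntegral B A] (e : B →+* ℂ) (a : A) (t : ℂ)
    (ht : ((minpoly B a).map e).eval t = 0) :
    ∃ φ : A →+* ℂ, φ.comp (algebraMap B A) = e ∧ φ a = t := by
  have ha : IsIntegral B a := Algebra.IsIntegral.isIntegral a
  let π : Polynomial B →+* A := (Polynomial.aeval a).toRingHom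
  let e' : Polynomial B →+* ℂ := Polynomial.eval₂RingHom e t
  let _ : Algebra (Polynomial B) A := π.toAlgebra
  have hmap : algebraMap (Polynomial B) A = π := rfl
  have : IsScalarTower B (Polynomial B) A := IsScalarTower.of_algebraMap_eq (fun x => by
    rw [hmap]; simp [π])
  have : Algebra.IsIntegral (Polynomial B) A := Algebra.IsIntegral.tower_top (R := B)
  have : (RingHom.ker e').IsPrime := RingHom.ker_isPrime e'
  have hker : RingHom.ker (algebraMap (Polynomial B) A) ≤ RingHom.ker e' := by
    rw [hmap]
    intro p hp
    rw [RingHom.mem_ker] at hp ⊢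
    obtain ⟨r, rfl⟩ := minpoly.isIntegrallyClosed_dvd ha (p := p) hp
    rw [map_mul]
    have : e' (minpoly B a) = 0 := by
      simpa [e', Polynomial.eval_map] using ht
    rw [this, zero_mul]
  obtain ⟨Q, hQ, hQc⟩ := Ideal.exists_ideal_over_prime_of_isIntegral_of_isDomain (S := A)
    (RingHom.ker e') hker
  have hint : Algebra.IsIntegral (Polynomial B ⧸ (Q.comap (algebraMap (Polynomial B) A))) (A ⧸ Q) :=
    Ideal.Quotient.algebra_isIntegral_of_liesOver Q (Q.comap (algebraMap (Polynomial B) A))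
  obtain ⟨l, hl⟩ := aux_lift
    (Ideal.Quotient.lift (Q.comap (algebraMap (Polynomial B) A)) e'
      (fun p hp => by rw [hQc] at hp; exact hp))
    (RingHom.lift_injective_of_ker_le_ideal _ _ (by rw [hQc]))
    (algebraMap (Polynomial B ⧸ (Q.comap (algebraMap (Polynomial B) A))) (A ⧸ Q))
    Ideal.algebraMap_quotient_injective (fun x => hint.1 x)
  have key : ∀ p : Polynomial B, l (Ideal.Quotient.mk Q (π p)) = e' p := by
    intro p
    exact hl (Ideal.Quotient.mk _ p)
  refine ⟨l.comp (Ideal.Quotient.mk Q), ?_, ?_⟩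
  · ext b
    have := key (Polynomial.C b)
    simpa [π, e'] using this
  · have := key Polynomial.X
    simpa [π, e'] using this

lemma aux_core0 {N d : ℕ} {A : Type} [CommRing A] [IsDomain A] (m : MvPolynomial (Fin N) ℂ →+* A)
    (g : MvPolynomial (Fin d) ℂ →+* A) (ginj : Function.Injective g) (gint : g.IsIntegral)
    (gC : ∀ c, g (C c) = m (C c)) (x₀ : Fin N → ℂ)
    (φ₀ : A →+* ℂ) (hφm : ∀ p, φ₀ (m p) = eval x₀ p) (P : MvPolynomial (Fin N) ℂ) (hP : m P ≠ 0) :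
    ∃ (y₀ : Fin d → ℂ) (χ : Fin N → Polynomial (MvPolynomial (Fin d) ℂ))
      (b : MvPolynomial (Fin d) ℂ), b ≠ 0 ∧ (∀ i, (χ i).Monic) ∧
      (∀ i, ((χ i).map (eval y₀)).eval (x₀ i) = 0) ∧
      ∀ f : MvPolynomial (Fin N) ℂ, eval x₀ f = 0 →
        ∃ q : Polynomial (MvPolynomial (Fin d) ℂ), q.Monic ∧ (q.map (eval y₀)).eval 0 = 0 ∧
          ∀ y t, (q.map (eval y)).eval t = 0 → ∃ x : Fin N → ℂ, (∀ p, m p = 0 → eval x p = 0) ∧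
            eval x f = t ∧ (∀ i, ((χ i).map (eval y)).eval (x i) = 0) ∧
            (eval y b ≠ 0 → eval x P ≠ 0) := by
  let B := MvPolynomial (Fin d) ℂ
  let _ : Algebra B A := g.toAlgebra
  have hg : ∀ b, algebraMap B A b = g b := fun _ => rfl
  have : Algebra.IsIntegral B A := ⟨fun x => gint x⟩
  have : FaithfulSMul B A := (faithfulSMul_iff_algebraMap_injective B A).2 ginj
  have : Module.IsTorsionFree B A := inferInstance
  let y₀ : Fin d → ℂ := fun i => φ₀ (g (X i))
  have hφ₀ : φ₀.comp (algebraMap B A) = eval y₀ := by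
    apply MvPolynomial.ringHom_ext
    · intro c
      rw [RingHom.comp_apply, hg, gC, hφm, eval_C, eval_C]
    · intro i; simp [hg, y₀]
  have hroot : ∀ (φ : A →+* ℂ) (y : Fin d → ℂ), φ.comp (algebraMap B A) = eval y → ∀ a : A,
      ((minpoly B a).map (eval y)).eval (φ a) = 0 := by
    intro φ y hφ a
    rw [← hφ, Polynomial.eval_map, ← Polynomial.hom_eval₂]
    have := minpoly.aeval B a
    rw [Polynomial.aeval_def] at this
    rw [this, map_zero]
  obtain ⟨b, hb0, r, hr⟩ := (Algebra.IsIntegral.isIntegral (R := B) (m P : A)).isAlgebraic.exists_nonzero_dvd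
    (mem_nonZeroDivisors_of_ne_zero hP)
  refine ⟨y₀, fun i => minpoly B (m (X i) : A), b, hb0, 
    fun i => minpoly.monic (Algebra.IsIntegral.isIntegral _), ?_, ?_⟩
  · intro i
    have := hroot φ₀ y₀ hφ₀ (m (X i))
    rwa [hφm, eval_X] at this
  · intro f hf
    refine ⟨minpoly B (m f : A), minpoly.monic (Algebra.IsIntegral.isIntegral _), ?_, ?_⟩
    · have := hroot φ₀ y₀ hφ₀ (m f)
      rwa [hφm, hf] at this
    · intro y t ht
      obtain ⟨φ, hφ, hφt⟩ := aux_ext (A := A) (eval y) _ t ht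
      let x : Fin N → ℂ := fun i => φ (m (X i))
      have hx : ∀ p, φ (m p) = eval x p := by
        intro p
        have : φ.comp m = eval x := by
          apply MvPolynomial.ringHom_ext
          · intro c
            have := RingHom.congr_fun hφ (C c)
            rw [RingHom.comp_apply, hg, gC] at this
            simpa using this
          · intro i; simp [x]
        exact RingHom.congr_fun this p
      refine ⟨x, ?_, ?_, ?_, ?_⟩
      · intro p hp
        rw [← hx, hp, map_zero]
      · rw [← hx, hφt]
      · intro i
        exact hroot φ y hφ _
      · intro hby h0
        apply hby
        have := congrArg φ hr
        rw [map_mul, hx, h0, zero_mul, ← RingHom.comp_apply, hφ] at this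
        exact this

lemma aux_core1 {N : ℕ} (I : Ideal (MvPolynomial (Fin N) ℂ)) (hI : I.IsPrime) (x₀ : Fin N → ℂ)
    (hx₀ : ∀ p ∈ I, eval x₀ p = 0) (P : MvPolynomial (Fin N) ℂ) (hP : P ∉ I) :
    ∃ (d : ℕ) (y₀ : Fin d → ℂ) (χ : Fin N → Polynomial (MvPolynomial (Fin d) ℂ))
      (b : MvPolynomial (Fin d) ℂ), b ≠ 0 ∧ (∀ i, (χ i).Monic) ∧
      (∀ i, ((χ i).map (eval y₀)).eval (x₀ i) = 0) ∧
      ∀ f : MvPolynomial (Fin N) ℂ, eval x₀ f = 0 →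
        ∃ q : Polynomial (MvPolynomial (Fin d) ℂ), q.Monic ∧ (q.map (eval y₀)).eval 0 = 0 ∧
          ∀ y t, (q.map (eval y)).eval t = 0 → ∃ x : Fin N → ℂ, (∀ p ∈ I, eval x p = 0) ∧
            eval x f = t ∧ (∀ i, ((χ i).map (eval y)).eval (x i) = 0) ∧
            (eval y b ≠ 0 → eval x P ≠ 0) := by
  obtain ⟨d, -, g, ginj, gint⟩ := exists_integral_inj_algHom_of_quotient I hI.ne_top
  obtain ⟨y₀, χ, b, h1, h2, h3, h4⟩ := aux_core0 (Ideal.Quotient.mk I) g.toRingHom ginj gint (fun c => g.commutes c) x₀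
    (Ideal.Quotient.lift I (eval x₀) hx₀) (fun p => Ideal.Quotient.lift_mk _ _ _) P
    (by rwa [Ne, Ideal.Quotient.eq_zero_iff_mem])
  refine ⟨d, y₀, χ, b, h1, h2, h3, fun f hf => ?_⟩
  obtain ⟨q, hq1, hq2, hq3⟩ := h4 f hf
  refine ⟨q, hq1, hq2, fun y t ht => ?_⟩
  obtain ⟨x, hx1, hx2⟩ := hq3 y t ht
  exact ⟨x, fun p hp => hx1 p (Ideal.Quotient.eq_zero_iff_mem.2 hp), hx2⟩

lemma aux_small_root (q : Polynomial ℂ) (hq : q.Monic) (ε : ℝ) (hε : 0 < ε)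
    (h : ‖q.coeff 0‖ < ε ^ q.natDegree) : ∃ t, q.eval t = 0 ∧ ‖t‖ < ε := by
  by_contra! hcon
  have hs : q.Splits := IsAlgClosed.splits q
  rw [hs.coeff_zero_eq_prod_roots_of_monic hq, hs.natDegree_eq_card_roots] at h
  have key : ∀ s : Multiset ℂ, (∀ t ∈ s, ε ≤ ‖t‖) → ε ^ s.card ≤ ‖s.prod‖ := by
    intro s
    induction s using Multiset.induction_on with
    | empty => simp
    | cons a s ih =>
      intro hs
      rw [Multiset.card_cons, Multiset.prod_cons, norm_mul, pow_succ']
      exact mul_le_mul (hs a (by simp)) (ih fun t ht => hs t (by simp [ht])) (by positivity)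
        (norm_nonneg _)
  have h2 := key q.roots (fun t ht => hcon t (by
    have := (Polynomial.mem_roots'.1 ht).2
    exact this))
  rw [norm_mul, norm_pow, norm_neg, norm_one, one_pow, one_mul] at h
  linarith

lemma aux_root_bound (q : Polynomial ℂ) (hq : q.Monic) (x : ℂ) (hx : q.eval x = 0) :
    ‖x‖ ≤ 1 + ∑ j ∈ Finset.range q.natDegree, ‖q.coeff j‖ := by
  have h := Polynomial.IsRoot.norm_lt_cauchyBound hq.ne_zero (a := x) hx
  have h2 : Polynomial.cauchyBound q ≤ 1 + ∑ j ∈ Finset.range q.natDegree, ‖q.coeff j‖₊ := by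
    rw [Polynomial.cauchyBound, hq.leadingCoeff, nnnorm_one, div_one, add_comm]
    gcongr
    exact Finset.sup_le fun j hj => Finset.single_le_sum (f := fun j => ‖q.coeff j‖₊) (fun _ _ => zero_le) hj
  have h3 : ((Polynomial.cauchyBound q : NNReal) : ℝ) ≤ ((1 + ∑ j ∈ Finset.range q.natDegree, ‖q.coeff j‖₊ : NNReal) : ℝ) := by
    exact_mod_cast h2
  push_cast at h3
  have h4 : ‖x‖ < ((Polynomial.cauchyBound q : NNReal) : ℝ) := NNReal.coe_lt_coe.2 h
  exact h4.le.trans h3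

lemma aux_sep {N : ℕ} (x₀ : Fin N → ℂ) (R : Set (Fin N → ℂ)) (hR : R.Finite) :
    ∃ f : MvPolynomial (Fin N) ℂ, eval x₀ f = 0 ∧ ∀ r ∈ R, eval r f = 0 → r = x₀ := by
  classical
  have hℓ : ∀ r : Fin N → ℂ, ∃ l : MvPolynomial (Fin N) ℂ, r ≠ x₀ → eval r l = 0 ∧ eval x₀ l = 1 := by
    intro r
    by_cases h : r = x₀
    · exact ⟨0, fun h' => absurd h h'⟩
    · obtain ⟨i, hi⟩ := Function.ne_iff.1 h
      refine ⟨C ((x₀ i - r i)⁻¹) * (X i - C (r i)), fun _ => ?_⟩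
      have : x₀ i - r i ≠ 0 := sub_ne_zero.2 (Ne.symm hi)
      simp [this]
  choose l hl using hℓ
  refine ⟨1 - ∏ r ∈ hR.toFinset.erase x₀, l r, ?_, ?_⟩
  · rw [map_sub, map_one, map_prod, Finset.prod_eq_one, sub_self]
    intro r hr
    exact (hl r (Finset.ne_of_mem_erase hr)).2
  · intro r hr h0
    by_contra hne
    have : r ∈ hR.toFinset.erase x₀ := by simp [hne, hr]
    rw [map_sub, map_one, map_prod, Finset.prod_eq_zero this (hl r hne).1] at h0
    simp at h0

lemma aux_nonvanish {d : ℕ} (b : MvPolynomial (Fin d) ℂ) (hb : b ≠ 0) (y₀ : Fin d → ℂ)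
    (U : Set (Fin d → ℂ)) (hU : U ∈ nhds y₀) : ∃ y ∈ U, eval y b ≠ 0 := by
  by_contra! hcon
  obtain ⟨ε, hε, hball⟩ := Metric.mem_nhds_iff.1 hU
  apply hb
  apply MvPolynomial.funext_set (fun i => Metric.ball (y₀ i) ε)
  · intro i
    exact infinite_of_mem_nhds (y₀ i) (Metric.ball_mem_nhds _ hε)
  · intro x hx
    rw [map_zero]
    apply hcon
    apply hball
    rw [ball_pi _ hε]
    exact hx

lemma aux_cont {d : ℕ} (q : Polynomial (MvPolynomial (Fin d) ℂ)) :
    Continuous (fun z : (Fin d → ℂ) × ℂ => (q.map (eval z.1)).eval z.2) := by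
  simp only [Polynomial.eval_map, Polynomial.eval₂_eq_sum_range]
  refine continuous_finsetSum _ fun j _ => ?_
  exact ((MvPolynomial.continuous_eval _).comp continuous_fst).mul (continuous_snd.pow _)

open Filter Topology in
lemma aux_dense {N : ℕ} (I : Ideal (MvPolynomial (Fin N) ℂ)) (hI : I.IsPrime) (x₀ : Fin N → ℂ)
    (hx₀ : ∀ p ∈ I, eval x₀ p = 0) (P : MvPolynomial (Fin N) ℂ) (hP : P ∉ I)
    (W : Set (Fin N → ℂ)) (hW : W ∈ nhds x₀) :
    ∃ x ∈ W, (∀ p ∈ I, eval x p = 0) ∧ eval x P ≠ 0 := by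
  obtain ⟨d, y₀, χ, b, hb, hχ, hχ₀, H⟩ := aux_core1 I hI x₀ hx₀ P hP
  have hR : (Set.pi Set.univ (fun i => {t : ℂ | ((χ i).map (eval y₀)).eval t = 0})).Finite := by
    refine Set.Finite.pi' (fun i => ?_) |>.subset (fun x hx i => hx i trivial)
    exact Polynomial.finite_setOfPred_isRoot ((hχ i).map _).ne_zero
  obtain ⟨f, hf0, hfR⟩ := aux_sep x₀ _ hR
  obtain ⟨q, hq, hq0, hqx⟩ := H f hf0
  have hc0 : eval y₀ (q.coeff 0) = 0 := by
    rw [← Polynomial.coeff_zero_eq_eval_zero, Polynomial.coeff_map] at hq0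
    exact hq0
  have hseq : ∀ k : ℕ, ∃ (y : Fin d → ℂ) (x : Fin N → ℂ), dist y y₀ < 1 / ((k : ℝ) + 1) ∧
      (∀ p ∈ I, eval x p = 0) ∧ ‖eval x f‖ < 1 / ((k : ℝ) + 1) ∧
      (∀ i, ((χ i).map (eval y)).eval (x i) = 0) ∧ eval x P ≠ 0 := by
    intro k
    have hk : 0 < 1 / ((k : ℝ) + 1) := by positivity
    have hc : Continuous (fun y => ‖eval y (q.coeff 0)‖) :=
      (MvPolynomial.continuous_eval _).norm
    have h1 : ∀ᶠ y in 𝓝 y₀, ‖eval y (q.coeff 0)‖ < (1 / ((k : ℝ) + 1)) ^ q.natDegree :=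
      hc.continuousAt.eventually_lt continuousAt_const (by
        rw [hc0, norm_zero]; positivity)
    have h2 : ∀ᶠ y in 𝓝 y₀, dist y y₀ < 1 / ((k : ℝ) + 1) := Metric.ball_mem_nhds _ hk
    obtain ⟨y, ⟨hy1, hy2⟩, hyb⟩ := aux_nonvanish b hb y₀ _ (h1.and h2)
    obtain ⟨t, ht, htε⟩ := aux_small_root (q.map (eval y)) (hq.map _) _ hk (by
      rw [Polynomial.coeff_map, hq.natDegree_map]; exact hy1)
    obtain ⟨x, hxI, hxf, hxχ, hxP⟩ := hqx y t ht
    exact ⟨y, x, hy2, hxI, by rw [hxf]; exact htε, hxχ, hxP hyb⟩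
  choose y x hy hxI hxf hxχ hxP using hseq
  have hlim : Tendsto (fun k : ℕ => 1 / ((k : ℝ) + 1)) atTop (𝓝 0) :=
    tendsto_one_div_add_atTop_nhds_zero_nat
  have hylim : Tendsto y atTop (𝓝 y₀) :=
    tendsto_iff_dist_tendsto_zero.2 (squeeze_zero (fun _ => dist_nonneg) (fun k => (hy k).le) hlim)
  have hbd : ∀ i, ∃ M : ℝ, ∀ k, ‖x k i‖ ≤ M := by
    intro i
    have hc : Continuous (fun z : Fin d → ℂ => 1 + ∑ j ∈ Finset.range (χ i).natDegree, ‖eval z ((χ i).coeff j)‖) :=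
      continuous_const.add (continuous_finsetSum _ fun j _ => (MvPolynomial.continuous_eval _).norm)
    obtain ⟨M, hM⟩ := ((hc.tendsto y₀).comp hylim).bddAbove_range
    refine ⟨M, fun k => ?_⟩
    have := aux_root_bound _ ((hχ i).map (eval (y k))) _ (hxχ k i)
    simp only [(hχ i).natDegree_map, Polynomial.coeff_map] at this
    exact this.trans (hM ⟨k, rfl⟩)
  choose M hM using hbd
  have hcomp : IsCompact (Set.pi Set.univ (fun i => Metric.closedBall (0 : ℂ) (M i))) :=
    isCompact_univ_pi fun i => isCompact_closedBall _ _
  obtain ⟨a, -, φ, hφ, hxa⟩ := hcomp.tendsto_subseq (x := x) (fun k i _ => by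
    simpa using hM i k)
  have hya : Tendsto (y ∘ φ) atTop (𝓝 y₀) := hylim.comp hφ.tendsto_atTop
  have haf : eval a f = 0 := by
    have h1 : Tendsto (fun k => ‖eval (x (φ k)) f‖) atTop (𝓝 ‖eval a f‖) :=
      (((MvPolynomial.continuous_eval f).tendsto a).comp hxa).norm
    have h2 : Tendsto (fun k => ‖eval (x (φ k)) f‖) atTop (𝓝 0) :=
      squeeze_zero (fun _ => norm_nonneg _) (fun k => (hxf (φ k)).le) (hlim.comp hφ.tendsto_atTop)
    exact norm_eq_zero.1 (tendsto_nhds_unique h1 h2)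
  have haR : a = x₀ := by
    refine hfR a (fun i _ => ?_) haf
    have h1 : Tendsto (fun k => ((χ i).map (eval (y (φ k)))).eval (x (φ k) i)) atTop
        (𝓝 (((χ i).map (eval y₀)).eval (a i))) :=
      ((aux_cont (χ i)).tendsto (y₀, a i)).comp
        (hya.prodMk_nhds (((continuous_apply i).tendsto a).comp hxa))
    simp only [hxχ] at h1
    exact tendsto_nhds_unique h1 tendsto_const_nhds |>.trans rfl
  rw [haR] at hxa
  obtain ⟨k, hk⟩ := (hxa.eventually hW).exists
  exact ⟨x (φ k), hk, hxI _, hxP _⟩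

open Filter Topology in
lemma aux_local {N m : ℕ} (x₀ : Fin N → ℂ) (hx₀ : star x₀ = x₀) (F : (Fin N → ℂ) → (Fin m → ℂ))
    (hF : ContDiff ℂ 1 F) (hFs : ∀ z, F (star z) = star (F z))
    (J : (Fin N → ℂ) →L[ℂ] (Fin m → ℂ)) (hJ : HasFDerivAt F J x₀)
    (hJs : ∀ z, J (star z) = star (J z)) (hsurj : Function.Surjective J)
    (P : (Fin N → ℂ) → ℂ) (hP : Differentiable ℂ P) (O : Set (Fin N → ℂ)) (hO : O ∈ 𝓝 x₀)
    (hPO : ∀ z ∈ O, F z = 0 → star z = z → P z = 0) (hF0 : F x₀ = 0) :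
    ∀ᶠ z in 𝓝 x₀, F z = 0 → P z = 0 := by
  -- a real right inverse
  obtain ⟨K, hK, hKs⟩ : ∃ K : (Fin m → ℂ) →L[ℂ] (Fin N → ℂ), (∀ w, J (K w) = w) ∧
      ∀ w, K (star w) = star (K w) := by
    choose v hv using fun j : Fin m => hsurj (Pi.single j 1)
    let u : Fin m → (Fin N → ℂ) := fun j => (1 / 2 : ℂ) • (v j + star (v j))
    have hu : ∀ j, J (u j) = Pi.single j 1 := by
      intro j
      simp only [u, map_smul, map_add, hJs, hv]
      ext i
      by_cases h : i = j
      · subst h; simp; norm_num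
      · simp [h]
    have hus : ∀ j, star (u j) = u j := by
      intro j
      simp only [u, star_smul, star_add, star_star]
      rw [add_comm]
      congr 1
      simp
    let K : (Fin m → ℂ) →L[ℂ] (Fin N → ℂ) :=
      ∑ j, (ContinuousLinearMap.proj (R := ℂ) (φ := fun _ : Fin m => ℂ) j).smulRight (u j)
    have hKa : ∀ w, K w = ∑ j, w j • u j := by
      intro w; simp [K]
    refine ⟨K, fun w => ?_, fun w => ?_⟩
    · rw [hKa, map_sum]
      simp only [map_smul, hu]
      ext i
      simp [Finset.sum_apply, Pi.single_apply]
    · rw [hKa, hKa, star_sum]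
      refine Finset.sum_congr rfl fun j _ => ?_
      rw [star_smul, hus, Pi.star_apply]
  let G : (Fin N → ℂ) → (Fin N → ℂ) := fun z => z + K (F z - J (z - x₀))
  have hGx₀ : G x₀ = x₀ := by simp [G, hF0]
  have hGc : ContDiff ℂ 1 G :=
    contDiff_id.add (K.contDiff.comp (hF.sub (J.contDiff.comp (contDiff_id.sub contDiff_const))))
  have hGs : ∀ z, G (star z) = star (G z) := by
    intro z
    have : star z - x₀ = star (z - x₀) := by rw [star_sub, hx₀]
    simp only [G, this, hJs, hFs, ← star_sub, hKs, star_add]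
  have hJG : ∀ z, J (G z - x₀) = F z := by
    intro z
    simp only [G, add_sub_right_comm, map_add, hK]
    abel
  have hGd : HasFDerivAt G ((ContinuousLinearEquiv.refl ℂ (Fin N → ℂ) : (Fin N → ℂ) ≃L[ℂ] (Fin N → ℂ)) : (Fin N → ℂ) →L[ℂ] (Fin N → ℂ)) x₀ := by
    have h1 : HasFDerivAt (fun z => J (z - x₀)) J x₀ := by
      have := J.hasFDerivAt.comp x₀ ((hasFDerivAt_id x₀).sub_const x₀)
      exact this
    have h2 : HasFDerivAt G (ContinuousLinearMap.id ℂ (Fin N → ℂ) + K.comp (J - J)) x₀ :=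
      (hasFDerivAt_id x₀).add (K.hasFDerivAt.comp x₀ (hJ.sub h1))
    refine h2.congr_fderiv ?_
    rw [sub_self, ContinuousLinearMap.comp_zero, add_zero]
    rfl
  have hGa : ContDiffAt ℂ 1 G x₀ := hGc.contDiffAt
  let e := hGa.toOpenPartialHomeomorph G hGd one_ne_zero
  have heG : ∀ z, e z = G z := fun z => rfl
  have hxs : x₀ ∈ e.source := hGa.mem_toOpenPartialHomeomorph_source hGd one_ne_zero
  have hxt : x₀ ∈ e.target := by
    have := e.map_source hxs
    rwa [heG, hGx₀] at this
  have hsym : e.symm x₀ = x₀ := by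
    have := e.left_inv hxs
    rwa [heG, hGx₀] at this
  have hinvd : ∀ᶠ w in 𝓝 x₀, DifferentiableAt ℂ e.symm w := by
    have h : ContDiffAt ℂ 1 e.symm (G x₀) := hGa.to_localInverse hGd one_ne_zero
    rw [hGx₀] at h
    have := h.eventually (by simp)
    filter_upwards [this] with w hw
    exact hw.differentiableAt one_ne_zero
  have hinvc : Tendsto e.symm (𝓝 x₀) (𝓝 x₀) := by
    have := (e.continuousAt_symm hxt).tendsto
    rwa [hsym] at this
  have hstar : Tendsto (star : (Fin N → ℂ) → (Fin N → ℂ)) (𝓝 x₀) (𝓝 x₀) := by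
    have := (continuous_star (R := Fin N → ℂ)).tendsto x₀
    rwa [hx₀] at this
  have hsn : e.source ∈ 𝓝 x₀ := e.open_source.mem_nhds hxs
  have hall : ∀ᶠ w in 𝓝 x₀, w ∈ e.target ∧ e.symm w ∈ O ∧ star (e.symm w) ∈ e.source ∧
      DifferentiableAt ℂ e.symm w := by
    filter_upwards [e.open_target.mem_nhds hxt, hinvc hO, (hstar.comp hinvc) hsn, hinvd] with w h1 h2 h3 h4
    exact ⟨h1, h2, h3, h4⟩
  obtain ⟨ε, hε, hball⟩ := Metric.eventually_nhds_iff.1 hall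
  have hGt : Tendsto G (𝓝 x₀) (𝓝 x₀) := by
    have := hGc.continuous.tendsto x₀
    rwa [hGx₀] at this
  filter_upwards [hsn, hGt (Metric.ball_mem_nhds x₀ (show 0 < ε / 4 by positivity))] with z hz hzb hFz
  have hzb' : ‖G z - x₀‖ < ε / 4 := by simpa [dist_eq_norm] using hzb
  set a := G z - x₀ with ha
  have hJa : J a = 0 := by rw [ha, hJG, hFz]
  obtain ⟨u, hu⟩ : ∃ u : Fin N → ℂ, u = (1 / 2 : ℂ) • (a + star a) := ⟨_, rfl⟩
  obtain ⟨v, hv⟩ : ∃ v : Fin N → ℂ, v = (-Complex.I / 2 : ℂ) • (a - star a) := ⟨_, rfl⟩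
  have hus : star u = u := by
    simp only [hu, star_smul, star_add, star_star]
    rw [add_comm]; congr 1; simp
  have hvs : star v = v := by
    ext i
    simp [hv]
    ring
  have huv : a = u + Complex.I • v := by
    ext i
    simp [hu, hv]
    ring_nf
    simp
    ring
  have hJu : J u = 0 := by simp [hu, hJs, hJa]
  have hJv : J v = 0 := by simp [hv, hJs, hJa]
  have hun : ‖u‖ ≤ ‖a‖ := by
    have := norm_add_le a (star a)
    rw [norm_star] at this
    simp only [hu, norm_smul]
    norm_num
    linarith
  have hvn : ‖v‖ ≤ ‖a‖ := by
    have := norm_sub_le a (star a)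
    rw [norm_star] at this
    simp only [hv, norm_smul]
    norm_num
    linarith
  have hs : ∀ s : ℂ, ‖s‖ < 2 → dist (x₀ + (u + s • v)) x₀ < ε := by
    intro s hs
    rw [dist_eq_norm, add_sub_cancel_left]
    have h1 := norm_add_le u (s • v)
    rw [norm_smul] at h1
    have h2 : ‖s‖ * ‖v‖ ≤ 2 * ‖a‖ := mul_le_mul hs.le hvn (norm_nonneg _) (by norm_num)
    linarith
  let h : ℂ → ℂ := fun s => P (e.symm (x₀ + (u + s • v)))
  have hd : DifferentiableOn ℂ h (Metric.ball 0 2) := by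
    intro s hsb
    have hs2 := (hball (hs s (by simpa using hsb))).2.2.2
    apply DifferentiableAt.differentiableWithinAt
    refine (hP _).comp s (DifferentiableAt.comp s (g := e.symm) hs2 ?_)
    fun_prop
  have hreal : ∀ r : ℝ, ‖(r : ℂ)‖ < 2 → h r = 0 := by
    intro r hr
    obtain ⟨h1, h2, h3, -⟩ := hball (hs r hr)
    set w := x₀ + (u + (r : ℂ) • v) with hw
    have hws : star w = w := by
      rw [hw, star_add, star_add, star_smul, hx₀, hus, hvs]
      simp
    have hGw : G (e.symm w) = w := e.right_inv h1
    have hreal' : star (e.symm w) = e.symm w := by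
      apply e.injOn h3 (e.map_target h1)
      rw [heG, heG, hGs, hGw, hws]
    have hFw : F (e.symm w) = 0 := by
      rw [← hJG, hGw, hw, add_sub_cancel_left, map_add, map_smul, hJu, hJv]
      simp
    exact hPO _ h2 hFw hreal'
  have han : AnalyticOnNhd ℂ h (Metric.ball 0 2) := hd.analyticOnNhd Metric.isOpen_ball
  have hfr : ∃ᶠ s in 𝓝[≠] (0 : ℂ), h s = 0 := by
    have ht : Tendsto (fun n : ℕ => (((1 / ((n : ℝ) + 1) : ℝ)) : ℂ)) atTop (𝓝[≠] (0 : ℂ)) := by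
      rw [tendsto_nhdsWithin_iff]
      constructor
      · have := (Complex.continuous_ofReal.tendsto 0).comp (tendsto_one_div_add_atTop_nhds_zero_nat (𝕜 := ℝ))
        simpa [Function.comp_def] using this
      · refine Eventually.of_forall fun n => ?_
        have : (0 : ℝ) < 1 / ((n : ℝ) + 1) := by positivity
        simpa using Complex.ofReal_ne_zero.2 this.ne'
    refine ht.frequently (Eventually.frequently (Eventually.of_forall fun n => hreal _ ?_))
    rw [Complex.norm_real, Real.norm_eq_abs, abs_of_pos (by positivity)]
    have : 1 / ((n : ℝ) + 1) ≤ 1 := by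
      rw [div_le_one (by positivity)]; linarith [(Nat.cast_nonneg n : (0 : ℝ) ≤ n)]
    linarith
  have hz0 := han.eqOn_zero_of_preconnected_of_frequently_eq_zero
    (convex_ball (0 : ℂ) 2).isPreconnected (Metric.mem_ball_self (by norm_num)) hfr
    (show Complex.I ∈ Metric.ball (0 : ℂ) 2 by simp)
  have : h Complex.I = P z := by
    simp only [h]
    rw [← huv, ha, add_sub_cancel, ← heG, e.left_inv hz]
  rw [← this, hz0]; rfl

lemma aux_fderiv {N : ℕ} (p : MvPolynomial (Fin N) ℝ) (x₀ : Fin N → ℂ) :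
    ∃ D : (Fin N → ℂ) →L[ℂ] ℂ, HasFDerivAt (fun z : Fin N → ℂ => aeval z p) D x₀ ∧
      ∀ v, D v = ∑ i, (aeval x₀ (pderiv i p)) * v i := by
  induction p using MvPolynomial.induction_on with
  | C a =>
    refine ⟨0, ?_, fun v => ?_⟩
    · simp only [aeval_C]
      exact hasFDerivAt_const (algebraMap ℝ ℂ a) x₀
    · simp
  | add p q hp hq =>
    obtain ⟨D, hD, hDv⟩ := hp
    obtain ⟨E, hE, hEv⟩ := hq
    refine ⟨D + E, ?_, fun v => ?_⟩
    · simp only [map_add]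
      exact hD.add hE
    · simp [hDv, hEv, add_mul, Finset.sum_add_distrib]
  | mul_X p j hp =>
    obtain ⟨D, hD, hDv⟩ := hp
    let π : (Fin N → ℂ) →L[ℂ] ℂ := ContinuousLinearMap.proj (R := ℂ) (φ := fun _ : Fin N => ℂ) j
    refine ⟨aeval x₀ p • π + x₀ j • D, ?_, fun v => ?_⟩
    · simp only [map_mul, aeval_X]
      exact hD.mul (π.hasFDerivAt (x := x₀))
    · have h1 : ∀ i, aeval x₀ (pderiv i (p * X j)) * v i =
          (if i = j then aeval x₀ p * v i else 0) + x₀ j * (aeval x₀ (pderiv i p) * v i) := by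
        intro i
        rw [Derivation.leibniz]
        by_cases h : i = j
        · subst h; simp; ring
        · rw [pderiv_X_of_ne (Ne.symm h)]; simp [h]; ring
      simp only [h1, Finset.sum_add_distrib, ← Finset.mul_sum]
      simp [π, hDv]

lemma aux_aeval_star {N : ℕ} (p : MvPolynomial (Fin N) ℝ) (z : Fin N → ℂ) :
    aeval (star z) p = star (aeval z p) := by
  induction p using MvPolynomial.induction_on with
  | C a => simp
  | add p q hp hq => simp only [map_add, hp, hq, star_add]
  | mul_X p j hp => simp only [map_mul, hp, star_mul', aeval_X, Pi.star_apply]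

/-- If an irreducible complex affine variety `V(ℂ) ⊆ ℂ^N`, cut out by real polynomials,
has a smooth real point `x₀`, then any Euclidean-open subset `H` of `V(ℝ) = V(ℂ) ∩ ℝ^N`
containing `x₀` is Zariski-dense in `V(ℂ)`: a complex polynomial vanishing on `H` vanishes
on all of `V(ℂ)`. -/
theorem real_points_zariski_dense_in_complex_of_smooth_point
    (N nd : ℕ) (hN : 1 ≤ N) (hnd : nd ≤ N)
    (S : Set (MvPolynomial (Fin N) ℝ))
    (V : Set (Fin N → ℂ)) (hV : V = {z | ∀ p ∈ S, MvPolynomial.aeval z p = 0})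
    (hne : V.Nonempty)
    (hirr : ∀ T₁ T₂ : Set (MvPolynomial (Fin N) ℂ),
      V ⊆ {z | ∀ p ∈ T₁, MvPolynomial.eval z p = 0} ∪
          {z | ∀ p ∈ T₂, MvPolynomial.eval z p = 0} →
      (V ⊆ {z | ∀ p ∈ T₁, MvPolynomial.eval z p = 0} ∨
       V ⊆ {z | ∀ p ∈ T₂, MvPolynomial.eval z p = 0}))
    (x₀ : Fin N → ℂ) (hx₀V : x₀ ∈ V) (hx₀R : ∀ i, (x₀ i).im = 0)
    -- `x₀` is a smooth point of `V(ℂ)`: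
    (W : Set (Fin N → ℂ)) (hWopen : IsOpen W) (hx₀W : x₀ ∈ W)
    (F : Fin (N - nd) → MvPolynomial (Fin N) ℝ)
    (hVF : V ∩ W = {z ∈ W | ∀ j, MvPolynomial.aeval z (F j) = 0})
    (hJac : (Matrix.of fun (j : Fin (N - nd)) (i : Fin N) =>
        MvPolynomial.aeval x₀ (MvPolynomial.pderiv i (F j))).rank = N - nd)
    -- `H` is an open subset of `V(ℝ)` containing `x₀`:
    (H : Set (Fin N → ℂ))
    (hH : ∃ O : Set (Fin N → ℂ), IsOpen O ∧ H = {z ∈ V | ∀ i, (z i).im = 0} ∩ O)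
    (hx₀H : x₀ ∈ H)
    (P : MvPolynomial (Fin N) ℂ) (hP : ∀ z ∈ H, MvPolynomial.eval z P = 0) :
    ∀ z ∈ V, MvPolynomial.eval z P = 0 := by
  obtain ⟨O, hOopen, hHO⟩ := hH
  have hx₀O : x₀ ∈ O := by rw [hHO] at hx₀H; exact hx₀H.2
  -- reality in terms of star
  have hreal : ∀ z : Fin N → ℂ, star z = z ↔ ∀ i, (z i).im = 0 := by
    intro z
    rw [funext_iff]
    refine forall_congr' fun i => ?_
    rw [Pi.star_apply]
    exact Complex.conj_eq_iff_im
  have hx₀s : star x₀ = x₀ := (hreal x₀).2 hx₀R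
  -- the vanishing ideal
  let I : Ideal (MvPolynomial (Fin N) ℂ) :=
    { carrier := {p | ∀ z ∈ V, eval z p = 0}
      add_mem' := fun {p q} hp hq z hz => by rw [map_add, hp z hz, hq z hz, add_zero]
      zero_mem' := fun z _ => map_zero _
      smul_mem' := fun c p hp z hz => by rw [smul_eq_mul, map_mul, hp z hz, mul_zero] }
  have hImem : ∀ p, p ∈ I ↔ ∀ z ∈ V, eval z p = 0 := fun _ => Iff.rfl
  have hI : I.IsPrime := by
    refine ⟨?_, ?_⟩
    · rw [Ideal.ne_top_iff_one]
      intro h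
      have := h x₀ hx₀V
      simp at this
    · intro p q hpq
      have := hirr {p} {q} (fun z hz => by
        have h := hpq z hz
        rw [map_mul, mul_eq_zero] at h
        simpa using h)
      rcases this with h | h
      · exact Or.inl fun z hz => h hz p rfl
      · exact Or.inr fun z hz => h hz q rfl
  -- local vanishing
  choose D hD hDv using fun j => aux_fderiv (F j) x₀
  let Fm : (Fin N → ℂ) → (Fin (N - nd) → ℂ) := fun z j => aeval z (F j)
  let J : (Fin N → ℂ) →L[ℂ] (Fin (N - nd) → ℂ) := ContinuousLinearMap.pi D
  have hF0 : Fm x₀ = 0 := by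
    have : x₀ ∈ V ∩ W := ⟨hx₀V, hx₀W⟩
    rw [hVF] at this
    funext j
    exact this.2 j
  have hloc : ∀ᶠ z in nhds x₀, Fm z = 0 → eval z P = 0 := by
    refine aux_local x₀ hx₀s Fm ?_ ?_ J ?_ ?_ ?_ (fun z => eval z P) ?_ (O ∩ W)
      ((hOopen.inter hWopen).mem_nhds ⟨hx₀O, hx₀W⟩) ?_ hF0
    · rw [contDiff_pi]
      intro j
      have h : ∀ z : Fin N → ℂ, aeval z (F j) = eval z (map (algebraMap ℝ ℂ) (F j)) := by
        intro z
        rw [eval_map, aeval_def]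
      simp only [Fm, h]
      exact contDiffOn_univ.1
        ((AnalyticOnNhd.eval_mvPolynomial (𝕜 := ℂ) _).contDiffOn uniqueDiffOn_univ)
    · intro z
      funext j
      exact aux_aeval_star (F j) z
    · exact hasFDerivAt_pi.2 hD
    · intro z
      funext j
      simp only [J, ContinuousLinearMap.coe_pi', Pi.star_apply, hDv, star_sum, star_mul']
      refine Finset.sum_congr rfl fun i _ => ?_
      rw [← aux_aeval_star, hx₀s]
    · have hJm : ∀ v, J v = Matrix.mulVecLin (Matrix.of fun (j : Fin (N - nd)) (i : Fin N) =>
          MvPolynomial.aeval x₀ (MvPolynomial.pderiv i (F j))) v := by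
        intro v
        funext j
        simp [J, hDv, Matrix.mulVec, dotProduct]
      have hr : LinearMap.range (Matrix.mulVecLin (Matrix.of fun (j : Fin (N - nd)) (i : Fin N) =>
          MvPolynomial.aeval x₀ (MvPolynomial.pderiv i (F j)))) = ⊤ := by
        apply Submodule.eq_top_of_finrank_eq
        rw [Module.finrank_fin_fun]
        exact hJac
      intro w
      obtain ⟨v, hv⟩ := LinearMap.range_eq_top.1 hr w
      exact ⟨v, by rw [hJm, hv]⟩
    · exact differentiableOn_univ.1
        (AnalyticOnNhd.eval_mvPolynomial (𝕜 := ℂ) P).differentiableOn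
    · intro z hz hFz hzs
      apply hP
      rw [hHO]
      refine ⟨⟨?_, (hreal z).1 hzs⟩, hz.1⟩
      have : z ∈ V ∩ W := by
        rw [hVF]
        exact ⟨hz.2, fun j => congrFun hFz j⟩
      exact this.1
  by_contra hcon
  have hPI : P ∉ I := hcon
  obtain ⟨x, hxW, hxI, hxP⟩ := aux_dense I hI x₀ (fun p hp => hp x₀ hx₀V) P hPI _
    (Filter.inter_mem hloc (hWopen.mem_nhds hx₀W))
  apply hxP
  apply hxW.1
  have hxV : x ∈ V := by
    rw [hV]
    intro p hp
    have h : ∀ z : Fin N → ℂ, aeval z p = eval z (map (algebraMap ℝ ℂ) p) := by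
      intro z
      rw [eval_map, aeval_def]
    rw [h]
    apply hxI
    intro z hz
    rw [← h]
    rw [hV] at hz
    exact hz p hp
  have : x ∈ V ∩ W := ⟨hxV, hxW.2⟩
  rw [hVF] at this
  funext j
  exact this.2 j
end

section
/- Let n ≥ 1 and let U ⊆ ℂⁿ be an open, preconnected set such that U ∩ ℝⁿ is nonempty. Let f: ℂⁿ → ℂ be analytic at every point of U (holomorphic on U). If f vanishes at every point of U ∩ ℝⁿ, then f vanishes identically on U. -/
open Filter Topology

/-- A function of `n` complex variables, holomorphic on an open preconnected set `U ⊆ ℂⁿ`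
meeting `ℝⁿ`, which vanishes at every real point of `U`, vanishes identically on `U`. -/
theorem holomorphic_eq_zero_of_eq_zero_on_reals
    (n : ℕ) (hn : 1 ≤ n) (U : Set (Fin n → ℂ))
    (hUopen : IsOpen U) (hUconn : IsPreconnected U)
    (hUR : ∃ z ∈ U, ∀ i, (z i).im = 0)
    (f : (Fin n → ℂ) → ℂ) (hf : ∀ z ∈ U, AnalyticAt ℂ f z)
    (hvan : ∀ z ∈ U, (∀ i, (z i).im = 0) → f z = 0) :
    ∀ z ∈ U, f z = 0 := by
  obtain ⟨a, haU, ha⟩ := hUR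
  obtain ⟨r, hr, hball⟩ := Metric.isOpen_iff.1 hUopen a haU
  have key : ∀ s : Finset (Fin n), ∀ z ∈ Metric.ball a r,
      (∀ i, i ∉ s → (z i).im = 0) → f z = 0 := by
    intro s
    induction s using Finset.induction_on with
    | empty =>
      intro z hz h
      exact hvan z (hball hz) (fun i => h i (by simp))
    | insert j s hj ih =>
      intro z hz h
      have hmem : ∀ w ∈ Metric.ball (a j) r, Function.update z j w ∈ Metric.ball a r := by
        intro w hw
        rw [Metric.mem_ball, dist_pi_lt_iff hr] at hz ⊢
        intro i
        by_cases hi : i = j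
        · subst hi
          simpa using hw
        · simpa [hi] using hz i
      have hg : AnalyticOnNhd ℂ (fun w => f (Function.update z j w)) (Metric.ball (a j) r) := by
        intro w hw
        have h1 : AnalyticAt ℂ (fun w : ℂ => Function.update z j w) w := by
          rw [analyticAt_pi_iff]
          intro i
          by_cases hi : i = j
          · subst hi
            simp only [Function.update_self]
            exact analyticAt_id
          · simpa [hi] using analyticAt_const
        exact AnalyticAt.fun_comp (hf _ (hball (hmem w hw))) h1
      have hfreq : ∃ᶠ w in 𝓝[≠] (a j), f (Function.update z j w) = 0 := by
        have ht : Tendsto (fun t : ℝ => a j + (t : ℂ)) (𝓝[≠] 0) (𝓝[≠] (a j)) := by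
          apply tendsto_nhdsWithin_of_tendsto_nhds_of_eventually_within
          · have : Tendsto (fun t : ℝ => a j + (t : ℂ)) (𝓝 0) (𝓝 (a j + ((0 : ℝ) : ℂ))) :=
              Continuous.tendsto (by fun_prop) 0
            simp only [Complex.ofReal_zero, add_zero] at this
            exact this.mono_left nhdsWithin_le_nhds
          · filter_upwards [self_mem_nhdsWithin] with t ht
            simpa using ht
        refine ht.frequently (Eventually.frequently ?_)
        have hb : ∀ᶠ t : ℝ in 𝓝[≠] 0, a j + (t : ℂ) ∈ Metric.ball (a j) r :=
          (ht.mono_right nhdsWithin_le_nhds).eventually (Metric.ball_mem_nhds _ hr)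
        filter_upwards [hb] with t ht'
        apply ih _ (hmem _ ht')
        intro i hi
        by_cases hij : i = j
        · subst hij
          simp [ha]
        · simpa [hij] using h i (by simp [hij, hi])
      have := hg.eqOn_zero_of_preconnected_of_frequently_eq_zero
        (convex_ball (a j) r).isPreconnected (Metric.mem_ball_self hr) hfreq
        (show z j ∈ Metric.ball (a j) r from (dist_le_pi_dist z a j).trans_lt hz)
      simpa using this
  have hev : f =ᶠ[𝓝 a] 0 := by
    filter_upwards [Metric.ball_mem_nhds a hr] with z hz
    exact key Finset.univ z hz (by simp)
  exact fun z hz => AnalyticOnNhd.eqOn_zero_of_preconnected_of_eventuallyEq_zero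
    (fun z hz => hf z hz) hUconn haU hev hz
end
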